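/- arXiv:2412.03444 — 2 statements merged into one kernel-verified Lean document; each statement's English description precedes it below -/
import Mathlib

section
/- Let α ∈ (1,∞) and let p, q, q' ∈ ℝ^d be probability vectors with strictly positive entries such that q' is majorized by q. Then Σ_{j=1}^d (p↑_j)^α (q'↓_j)^{1−α} ≤ Σ_{j=1}^d (p↑_j)^α (q↓_j)^{1−α}, where p↑ is p sorted increasingly and q↓, q'↓ are q, q' sorted decreasingly. (Applied with q' = λ(Φ(σ)) and q = λ(σ), where Φ(σ) is majorized by σ for any unital quantum channel Φ, this gives F_α^C(λ↑(ρ), λ↓(Φ(σ))) ≤ F_α^C(λ↑(ρ), λ↓(σ)).) -/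
open Matrix
open scoped ComplexOrder

/-- Real power of a (Hermitian) matrix via functional calculus on eigenvalues,
with `(0:ℝ) ^ t = 0` for `t ≠ 0`. Returns `0` on non-Hermitian input. -/
noncomputable def mpow {d : ℕ} (A : Matrix (Fin d) (Fin d) ℂ) (t : ℝ) :
    Matrix (Fin d) (Fin d) ℂ :=
  if hA : A.IsHermitian then
    (hA.eigenvectorUnitary : Matrix (Fin d) (Fin d) ℂ) *
      Matrix.diagonal (fun i => ((hA.eigenvalues i ^ t : ℝ) : ℂ)) *
      (star (hA.eigenvectorUnitary : Matrix (Fin d) (Fin d) ℂ))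
  else 0

/-- The quantum α-z-fidelity
`F_{α,z}(ρ,σ) = (Tr[(σ^{(1-α)/(2z)} ρ^{α/z} σ^{(1-α)/(2z)})^z])^{1/α}`. -/
noncomputable def Faz {d : ℕ} (ρ σ : Matrix (Fin d) (Fin d) ℂ) (α z : ℝ) : ℝ :=
  ((mpow (mpow σ ((1 - α) / (2 * z)) * mpow ρ (α / z) * mpow σ ((1 - α) / (2 * z))) z).trace.re)
    ^ (1 / α)

/-- The classical α-fidelity `F_α^C(p,q) = (Σ_i p_i^α q_i^{1-α})^{1/α}`. -/
noncomputable def FazC {d : ℕ} (p q : Fin d → ℝ) (α : ℝ) : ℝ :=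
  (∑ i, p i ^ α * q i ^ (1 - α)) ^ (1 / α)

/-- The vector `p` rearranged in increasing order. -/
noncomputable def sortUp {d : ℕ} (p : Fin d → ℝ) : Fin d → ℝ :=
  p ∘ Tuple.sort p

/-- The vector `p` rearranged in decreasing order. -/
noncomputable def sortDown {d : ℕ} (p : Fin d → ℝ) : Fin d → ℝ :=
  fun i => sortUp p i.rev

/-- `λ↑(A)`: the eigenvalues of a Hermitian matrix in increasing order. -/
noncomputable def eigUp {d : ℕ} {A : Matrix (Fin d) (Fin d) ℂ} (hA : A.IsHermitian) :
    Fin d → ℝ := sortUp hA.eigenvalues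

/-- `λ↓(A)`: the eigenvalues of a Hermitian matrix in decreasing order. -/
noncomputable def eigDown {d : ℕ} {A : Matrix (Fin d) (Fin d) ℂ} (hA : A.IsHermitian) :
    Fin d → ℝ := sortDown hA.eigenvalues

/-- `q'` is majorized by `q`: for every `k`, the sum of the `k` largest entries of `q'`
is at most the sum of the `k` largest entries of `q`, with equal total sums. -/
def MajorizedBy {d : ℕ} (q' q : Fin d → ℝ) : Prop :=
  (∀ k : ℕ,
      ∑ j ∈ Finset.univ.filter (fun j : Fin d => (j : ℕ) < k), sortDown q' j ≤
        ∑ j ∈ Finset.univ.filter (fun j : Fin d => (j : ℕ) < k), sortDown q j) ∧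
    ∑ j, q' j = ∑ j, q j

/-!
Karamata's argument with weights. Since `f` is convex, its chord slopes over `[yᵢ, xᵢ]` decrease
with `i` when `x` and `y` do; since `f` is antitone they are nonpositive. So
`wᵢ (f yᵢ - f xᵢ) = cᵢ (xᵢ - yᵢ)` with `c` nonnegative and monotone, and Abel summation reduces
the claim to the tail sums of `x - y` being nonnegative, which is what majorization provides.
-/

section Karamata

variable {ι : Type*} [LinearOrder ι]

theorem sum_mul_nonneg_of_monotoneOn_of_sum_tail_nonneg {R : Type*} [Ring R] [PartialOrder R]
    [IsOrderedRing R] {t : Finset ι} {c e : ι → R} (hc : MonotoneOn c t)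
    (hc0 : ∀ i ∈ t, 0 ≤ c i) (he : ∀ k ∈ t, 0 ≤ ∑ i ∈ t with k ≤ i, e i) :
    0 ≤ ∑ i ∈ t, c i * e i := by
  induction t using Finset.induction_on_min generalizing c with
  | empty => simp
  | insert a t ha ih =>
    have hat : a ∉ t := fun h => (ha a h).false
    have tail_insert (k : ι) (hk : k ∈ t) :
        ({i ∈ insert a t | k ≤ i} : Finset ι) = {i ∈ t | k ≤ i} := by
      rw [Finset.filter_insert, if_neg (ha k hk).not_ge]
    have total_nonneg : 0 ≤ ∑ i ∈ insert a t, e i := by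
      have h := he a (Finset.mem_insert_self a t)
      rwa [Finset.filter_true_of_mem (by simpa using fun i hi => (ha i hi).le)] at h
    have hshift : 0 ≤ ∑ i ∈ t, (c i - c a) * e i := by
      refine ih (fun i hi j hj hij => ?_) (fun i hi => ?_) (fun k hk => ?_)
      · exact sub_le_sub_right (hc (by simp_all) (by simp_all) hij) _
      · exact sub_nonneg.2 (hc (by simp) (by simp_all) (ha i hi).le)
      · simpa only [tail_insert k hk] using he k (Finset.mem_insert_of_mem hk)
    calc 0 ≤ c a * ∑ i ∈ insert a t, e i + ∑ i ∈ t, (c i - c a) * e i :=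
          add_nonneg (mul_nonneg (hc0 a (Finset.mem_insert_self a t)) total_nonneg) hshift
      _ = ∑ i ∈ insert a t, c i * e i := by
          simp only [Finset.sum_insert hat, sub_mul, Finset.sum_sub_distrib, Finset.mul_sum,
            mul_add]
          abel

variable {𝕜 : Type*} [Field 𝕜] [LinearOrder 𝕜] [IsStrictOrderedRing 𝕜] {S : Set 𝕜} {f : 𝕜 → 𝕜}

theorem slope_le_slope_of_convexOn (hf : ConvexOn 𝕜 S f) {x₁ x₂ y₁ y₂ : 𝕜}
    (hx₁ : x₁ ∈ S) (hx₂ : x₂ ∈ S) (hy₁ : y₁ ∈ S) (hy₂ : y₂ ∈ S) (hxy₁ : x₁ ≠ y₁) (hxy₂ : x₂ ≠ y₂)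
    (hx : x₁ ≤ x₂) (hy : y₁ ≤ y₂) : slope f x₁ y₁ ≤ slope f x₂ y₂ := by
  have move_right {a b b' : 𝕜} (ha : a ∈ S) (hb : b ∈ S) (hb' : b' ∈ S) (hab : b ≠ a)
      (hab' : b' ≠ a) (hbb' : b ≤ b') : slope f a b ≤ slope f a b' :=
    hf.slope_mono ha ⟨hb, hab⟩ ⟨hb', hab'⟩ hbb'
  -- One endpoint moves at a time; of the chords `(x₁, y₂)` and `(y₁, x₂)` one is nondegenerate.
  by_cases h : y₂ = x₁
  · have hyx : y₁ ≠ x₂ := fun h' =>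
      hxy₁ ((hx.trans_eq h'.symm).antisymm (hy.trans_eq h))
    calc slope f x₁ y₁ = slope f y₁ x₁ := slope_comm f x₁ y₁
      _ ≤ slope f y₁ x₂ := move_right hy₁ hx₁ hx₂ hxy₁ hyx.symm hx
      _ = slope f x₂ y₁ := slope_comm f y₁ x₂
      _ ≤ slope f x₂ y₂ := move_right hx₂ hy₁ hy₂ hyx hxy₂.symm hy
  · calc slope f x₁ y₁ ≤ slope f x₁ y₂ := move_right hx₁ hy₁ hy₂ hxy₁.symm h hy
      _ = slope f y₂ x₁ := slope_comm f x₁ y₂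
      _ ≤ slope f y₂ x₂ := move_right hy₂ hx₁ hx₂ (Ne.symm h) hxy₂ hx
      _ = slope f x₂ y₂ := slope_comm f y₂ x₂

theorem sum_mul_comp_le_sum_mul_comp_of_sum_tail_le (hf : ConvexOn 𝕜 S f) (hf' : AntitoneOn f S)
    {t : Finset ι} {w x y : ι → 𝕜} (hw : MonotoneOn w t) (hw0 : ∀ i ∈ t, 0 ≤ w i)
    (hx : AntitoneOn x t) (hy : AntitoneOn y t) (hxS : ∀ i ∈ t, x i ∈ S) (hyS : ∀ i ∈ t, y i ∈ S)
    (hyx : ∀ k ∈ t, ∑ i ∈ t with k ≤ i, y i ≤ ∑ i ∈ t with k ≤ i, x i) :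
    ∑ i ∈ t, w i * f (x i) ≤ ∑ i ∈ t, w i * f (y i) := by
  -- `slope f a a = 0` would break the monotonicity of `c`, so indices with `x i = y i` are dropped.
  set u : Finset ι := {i ∈ t | x i ≠ y i} with hu
  have hut : u ⊆ t := Finset.filter_subset _ _
  have hne (i : ι) (hi : i ∈ u) : x i ≠ y i := (Finset.mem_filter.1 hi).2
  let c : ι → 𝕜 := fun i => w i * -slope f (x i) (y i)
  have neg_slope_nonneg (i : ι) (hi : i ∈ u) : 0 ≤ -slope f (x i) (y i) :=
    neg_nonneg.2 (hf'.slope_nonpos (hxS i (hut hi)) (hyS i (hut hi)))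
  have c_mono : MonotoneOn c u := fun i hi j hj hij =>
    mul_le_mul (hw (hut hi) (hut hj) hij)
      (neg_le_neg (slope_le_slope_of_convexOn hf (hxS j (hut hj)) (hxS i (hut hi)) (hyS j (hut hj))
        (hyS i (hut hi)) (hne j hj) (hne i hi) (hx (hut hi) (hut hj) hij)
        (hy (hut hi) (hut hj) hij)))
      (neg_slope_nonneg i hi) (hw0 j (hut hj))
  have c_nonneg (i : ι) (hi : i ∈ u) : 0 ≤ c i :=
    mul_nonneg (hw0 i (hut hi)) (neg_slope_nonneg i hi)
  have tail_nonneg (k : ι) (hk : k ∈ u) : 0 ≤ ∑ i ∈ u with k ≤ i, (x i - y i) := by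
    rw [hu, Finset.filter_comm, Finset.sum_filter_of_ne fun i _ => sub_ne_zero.1,
      Finset.sum_sub_distrib]
    exact sub_nonneg.2 (hyx k (hut hk))
  refine sub_nonneg.1 ?_
  calc 0 ≤ ∑ i ∈ u, c i * (x i - y i) :=
        sum_mul_nonneg_of_monotoneOn_of_sum_tail_nonneg c_mono c_nonneg tail_nonneg
    _ = ∑ i ∈ t, c i * (x i - y i) :=
        Finset.sum_filter_of_ne fun i _ h => sub_ne_zero.1 (right_ne_zero_of_mul h)
    _ = ∑ i ∈ t, w i * f (y i) - ∑ i ∈ t, w i * f (x i) := by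
        rw [← Finset.sum_sub_distrib]
        refine Finset.sum_congr rfl fun i _ => ?_
        have chord : (y i - x i) * slope f (x i) (y i) = f (y i) - f (x i) :=
          sub_smul_slope f (x i) (y i)
        linear_combination w i * chord

end Karamata

theorem antitone_sortDown {d : ℕ} (p : Fin d → ℝ) : Antitone (sortDown p) :=
  (Tuple.monotone_sort p).comp_antitone Fin.rev_anti

theorem sum_sortDown {d : ℕ} (p : Fin d → ℝ) : ∑ j, sortDown p j = ∑ j, p j :=
  Equiv.sum_comp (Fin.revPerm.trans (Tuple.sort p)) p

theorem MajorizedBy.sum_tail_le {d : ℕ} {q q' : Fin d → ℝ} (h : MajorizedBy q' q) (k : Fin d) :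
    ∑ j with k ≤ j, sortDown q j ≤ ∑ j with k ≤ j, sortDown q' j := by
  have head_add_tail (p : Fin d → ℝ) :
      ∑ j with j < k, sortDown p j + ∑ j with k ≤ j, sortDown p j = ∑ j, p j := by
    simpa only [not_lt, sum_sortDown] using
      Finset.sum_filter_add_sum_filter_not Finset.univ (· < k) (sortDown p)
  have head_le : ∑ j with j < k, sortDown q' j ≤ ∑ j with j < k, sortDown q j := h.1 k
  linarith [head_add_tail q, head_add_tail q', h.2]

theorem convexOn_rpow_of_exponent_nonpos {r : ℝ} (hr : r ≤ 0) :
    ConvexOn ℝ (Set.Ioi 0) fun x : ℝ => x ^ r := by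
  refine convexOn_of_hasDerivWithinAt2_nonneg (convex_Ioi 0)
    (f' := fun x => r * x ^ (r - 1)) (f'' := fun x => r * ((r - 1) * x ^ (r - 1 - 1)))
    (continuousOn_id.rpow_const fun x hx => Or.inl (ne_of_gt hx)) ?_ ?_ ?_ <;>
    rw [interior_Ioi] <;> intro x (hx : 0 < x)
  · exact (Real.hasDerivAt_rpow_const (Or.inl hx.ne')).hasDerivWithinAt
  · exact ((Real.hasDerivAt_rpow_const (Or.inl hx.ne')).const_mul r).hasDerivWithinAt
  · exact mul_nonneg_of_nonpos_of_nonpos hr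
      (mul_nonpos_of_nonpos_of_nonneg (by linarith) (Real.rpow_nonneg hx.le _))

theorem stmt_10_general {d : ℕ} {S : Set ℝ} {f : ℝ → ℝ} (hf : ConvexOn ℝ S f)
    (hf' : AntitoneOn f S) {w q q' : Fin d → ℝ} (hw : Monotone w) (hw0 : ∀ j, 0 ≤ w j)
    (hq : ∀ i, q i ∈ S) (hq' : ∀ i, q' i ∈ S) (hmaj : MajorizedBy q' q) :
    ∑ j, w j * f (sortDown q' j) ≤ ∑ j, w j * f (sortDown q j) :=
  sum_mul_comp_le_sum_mul_comp_of_sum_tail_le hf hf' (hw.monotoneOn _) (fun j _ => hw0 j)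
    ((antitone_sortDown q').antitoneOn _) ((antitone_sortDown q).antitoneOn _) (fun _ _ => hq' _)
    (fun _ _ => hq _) fun k _ => hmaj.sum_tail_le k

/-- for `α ∈ (1,∞)` and probability vectors `p, q, q'` with positive entries
such that `q'` is majorized by `q`,
`Σ_j (p↑_j)^α (q'↓_j)^{1−α} ≤ Σ_j (p↑_j)^α (q↓_j)^{1−α}`. -/
theorem stmt_10 {d : ℕ} (α : ℝ) (hα : 1 < α)
    (p q q' : Fin d → ℝ)
    (hp : ∀ i, 0 < p i) (hq : ∀ i, 0 < q i) (hq' : ∀ i, 0 < q' i)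
    (hps : ∑ i, p i = 1) (hqs : ∑ i, q i = 1) (hq's : ∑ i, q' i = 1)
    (hmaj : MajorizedBy q' q) :
    ∑ j, sortUp p j ^ α * sortDown q' j ^ (1 - α) ≤
      ∑ j, sortUp p j ^ α * sortDown q j ^ (1 - α) := by
  have hr : 1 - α ≤ 0 := by linarith
  exact stmt_10_general (convexOn_rpow_of_exponent_nonpos hr)
    (Real.antitoneOn_rpow_Ioi_of_exponent_nonpos hr)
    (fun i j hij => Real.rpow_le_rpow (hp _).le (Tuple.monotone_sort p hij) (by linarith))
    (fun j => Real.rpow_nonneg (hp _).le α) hq hq' hmaj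
end

section
/- Let ρ and σ be positive definite d×d density matrices and let (α,z) satisfy either 1 < α ≤ 2 with α/2 ≤ z ≤ α, or 2 ≤ α < ∞ with α−1 ≤ z ≤ α. Then the maximum of F_{α,z}(ρ, Σ_i p_i U_i σ U_i*) over all mixed unitary channels — i.e., over all finite families of d×d unitary matrices U_i and weights p_i ≥ 0 with Σ_i p_i = 1 — equals F_α^C(λ↓(ρ), λ↑(σ)), and it is attained by a single unitary conjugation. -/
open Matrix
open scoped ComplexOrder

/-!
Diagonalize `ρ = V diag(r) Vᴴ` with `r` decreasing, and the output `τ = ∑ i, p i • U i σ (U i)ᴴ` as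
`W diag(t) Wᴴ` with `t` increasing, so that both `q = r ^ (α / z)` and
`u = t ^ ((1 - α) / (2 * z))` are decreasing. Horn's inequality then says that the eigenvalues of
`τ ^ ((1 - α) / (2 * z)) ρ ^ (α / z) τ ^ ((1 - α) / (2 * z))` are weakly log-majorized by `u q u`:
the `k`-th partial product of the eigenvalues is a determinant `det (Zᴴ A Z)` for an isometry `Z`
with `k` columns, and Cauchy–Binet bounds such a determinant by the product of the `k` largest
eigenvalues of each factor of `A`. Weak log-majorization survives taking `z`-th powers and implies
the inequality of sums, which is `F_{α,z}(ρ, τ) ≤ F_α^C(r, t)`.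

A mixed unitary channel acts on spectra by a doubly stochastic matrix `D`, so `t = D s` with
`s = λ↑(σ)`. Jensen's inequality for the convex function `x ↦ x ^ (1 - α)`, Birkhoff's theorem and
the rearrangement inequality give `F_α^C(r, D s) ≤ F_α^C(r, s)`. Rotating the eigenbasis of `σ` onto
that of `ρ` turns both estimates into equalities.
-/

section CauchyBinet

open Equiv

variable {m n R : Type*} [Fintype m] [DecidableEq m] [Fintype n] [CommRing R]

lemma det_mul_eq_sum_prod_mul_det_submatrix (A : Matrix m n R) (B : Matrix n m R) :
    (A * B).det = ∑ f : m → n, (∏ i, A i (f i)) * (B.submatrix f id).det := by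
  classical
  have hrows : A * B = fun i => ∑ j, A i j • B j := by
    ext i k
    simp [mul_apply]
  calc (A * B).det
      = detRowAlternating.toMultilinearMap fun i => ∑ j, A i j • B j := by rw [hrows]; rfl
    _ = _ := by
      rw [MultilinearMap.map_sum]
      exact Finset.sum_congr rfl fun f _ => MultilinearMap.map_smul_univ _ _ _

/-- The Cauchy–Binet formula, with every minor counted once per ordering of its columns: summing
over all maps `m → n` avoids choosing an order on the index types. -/
theorem factorial_mul_det_mul_eq_sum (A : Matrix m n R) (B : Matrix n m R) :
    ((Fintype.card m).factorial : R) * (A * B).det =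
      ∑ f : m → n, (A.submatrix id f).det * (B.submatrix f id).det := by
  classical
  have reindexed (π : Perm m) : (A * B).det =
      ∑ f : m → n, ((Perm.sign π : ℤ) : R) * (∏ i, A i (f (π i))) * (B.submatrix f id).det := by
    rw [det_mul_eq_sum_prod_mul_det_submatrix,
      ← (π.symm.arrowCongr (Equiv.refl n)).sum_comp]
    refine Finset.sum_congr rfl fun f _ => ?_
    have hdet : (B.submatrix (f ∘ π) id).det =
        ((Perm.sign π : ℤ) : R) * (B.submatrix f id).det := by
      rw [← det_permute]
      rfl
    change (∏ i, A i (f (π i))) * (B.submatrix (f ∘ π) id).det = _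
    rw [hdet]
    ring
  calc ((Fintype.card m).factorial : R) * (A * B).det
      = ∑ _π : Perm m, (A * B).det := by simp [Fintype.card_perm]
    _ = ∑ π : Perm m, ∑ f : m → n,
          ((Perm.sign π : ℤ) : R) * (∏ i, A i (f (π i))) * (B.submatrix f id).det :=
        Finset.sum_congr rfl fun π _ => reindexed π
    _ = _ := by
        rw [Finset.sum_comm]
        refine Finset.sum_congr rfl fun f _ => ?_
        rw [← Finset.sum_mul, ← det_transpose (A.submatrix id f), det_apply' (A.submatrix id f)ᵀ]
        rfl

end CauchyBinet

lemma val_le_val_of_strictMono {k d : ℕ} {g : Fin k → Fin d} (hg : StrictMono g) (i : Fin k) :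
    (i : ℕ) ≤ g i :=
  calc (i : ℕ) = (Finset.Iio i).card := (Fin.card_Iio i).symm
    _ ≤ (Finset.Iio (g i)).card :=
        Finset.card_le_card_of_injOn g (fun j hj => by simpa using hg (by simpa using hj))
          hg.injective.injOn
    _ = g i := Fin.card_Iio _

lemma prod_comp_injective_le_prod_castLE {d k : ℕ} (h : k ≤ d) {v : Fin d → ℝ}
    (hv : Antitone v) (hv0 : 0 ≤ v) {f : Fin k → Fin d} (hf : f.Injective) :
    ∏ i, v (f i) ≤ ∏ i : Fin k, v (i.castLE h) := by
  have hmono : StrictMono (f ∘ Tuple.sort f) :=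
    (Tuple.monotone_sort f).strictMono_of_injective (hf.comp (Tuple.sort f).injective)
  rw [← Equiv.prod_comp (Tuple.sort f)]
  exact Finset.prod_le_prod (fun _ _ => hv0 _) fun i _ => hv (val_le_val_of_strictMono hmono i)

lemma det_conjTranspose_mul_diagonal_mul_le {d k : ℕ} (h : k ≤ d) {v : Fin d → ℝ}
    (hv : Antitone v) (hv0 : 0 ≤ v) (Z : Matrix (Fin d) (Fin k) ℂ) :
    (Zᴴ * diagonal (Complex.ofReal ∘ v) * Z).det ≤
      ((∏ i : Fin k, v (i.castLE h) : ℝ) : ℂ) * (Zᴴ * Z).det := by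
  have hminor (f : Fin k → Fin d) : ((Zᴴ * diagonal (Complex.ofReal ∘ v)).submatrix id f).det =
      ((∏ i, v (f i) : ℝ) : ℂ) * (Zᴴ.submatrix id f).det := by
    have hcols : (Zᴴ * diagonal (Complex.ofReal ∘ v)).submatrix id f =
        Zᴴ.submatrix id f * diagonal (Complex.ofReal ∘ v ∘ f) := by
      ext i j
      simp
    rw [hcols, det_mul, det_diagonal, mul_comm, Complex.ofReal_prod]
    rfl
  have hsq (f : Fin k → Fin d) :
      0 ≤ (Zᴴ.submatrix id f).det * (Z.submatrix f id).det := by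
    rw [← conjTranspose_submatrix, det_conjTranspose]
    exact star_mul_self_nonneg _
  have hfact : (0 : ℂ) < (Fintype.card (Fin k)).factorial := by
    exact_mod_cast Nat.factorial_pos _
  refine le_of_mul_le_mul_left ?_ hfact
  rw [factorial_mul_det_mul_eq_sum, mul_left_comm, factorial_mul_det_mul_eq_sum, Finset.mul_sum]
  refine Finset.sum_le_sum fun f _ => ?_
  rw [hminor, mul_assoc]
  by_cases hf : f.Injective
  · refine mul_le_mul_of_nonneg_right ?_ (hsq f)
    exact_mod_cast prod_comp_injective_le_prod_castLE h hv hv0 hf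
  · obtain ⟨i, j, hij, hne⟩ : ∃ i j, f i = f j ∧ i ≠ j := by
      simpa [Function.Injective] using hf
    have hzero : (Z.submatrix f id).det = 0 :=
      det_zero_of_row_eq hne (by ext l; simp [hij])
    simp [hzero]

section WeakLogMajorization

lemma sum_mul_nonneg_of_antitone_of_sum_castLE_nonneg {d : ℕ} {w g : Fin d → ℝ}
    (hw : Antitone w) (hw0 : 0 ≤ w)
    (hg : ∀ k (h : k ≤ d), 0 ≤ ∑ i : Fin k, g (i.castLE h)) : 0 ≤ ∑ i, w i * g i := by
  induction d with
  | zero => simp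
  | succ d ih =>
    have hinit : 0 ≤ ∑ i : Fin d, (w i.castSucc - w (Fin.last d)) * g i.castSucc :=
      ih (w := fun i => w i.castSucc - w (Fin.last d)) (g := fun i => g i.castSucc)
        (fun i j hij => sub_le_sub_right (hw (Fin.castSucc_le_castSucc_iff.2 hij)) _)
        (fun i => sub_nonneg.2 (hw (Fin.le_last _)))
        (fun k hk => hg k (hk.trans d.le_succ))
    have hfull : 0 ≤ w (Fin.last d) * ∑ i, g i := mul_nonneg (hw0 _) (hg (d + 1) le_rfl)
    calc 0 ≤ _ := add_nonneg hinit hfull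
      _ = ∑ i, w i * g i := by
        simp only [Fin.sum_univ_castSucc, sub_mul, Finset.sum_sub_distrib, ← Finset.mul_sum]
        ring

lemma sum_le_sum_of_prod_castLE_le_of_pos {d : ℕ} {a b : Fin d → ℝ} (ha : Antitone a)
    (ha0 : ∀ i, 0 < a i) (hb0 : ∀ i, 0 < b i)
    (hab : ∀ k (h : k ≤ d), ∏ i : Fin k, a (i.castLE h) ≤ ∏ i : Fin k, b (i.castLE h)) :
    ∑ i, a i ≤ ∑ i, b i := by
  have hlog (i) : a i * (Real.log (b i) - Real.log (a i)) ≤ b i - a i :=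
    calc a i * (Real.log (b i) - Real.log (a i)) = a i * Real.log (b i / a i) := by
          rw [Real.log_div (hb0 i).ne' (ha0 i).ne']
      _ ≤ a i * (b i / a i - 1) :=
          mul_le_mul_of_nonneg_left (Real.log_le_sub_one_of_pos (div_pos (hb0 i) (ha0 i)))
            (ha0 i).le
      _ = b i - a i := by rw [mul_sub, mul_div_cancel₀ _ (ha0 i).ne', mul_one]
  have habel : 0 ≤ ∑ i, a i * (Real.log (b i) - Real.log (a i)) := by
    refine sum_mul_nonneg_of_antitone_of_sum_castLE_nonneg ha (fun i => (ha0 i).le) fun k h => ?_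
    rw [Finset.sum_sub_distrib, ← Real.log_prod fun i _ => (hb0 _).ne',
      ← Real.log_prod fun i _ => (ha0 _).ne', sub_nonneg]
    exact Real.log_le_log (Finset.prod_pos fun i _ => ha0 _) (hab k h)
  rw [← sub_nonneg, ← Finset.sum_sub_distrib]
  exact habel.trans (Finset.sum_le_sum fun i _ => hlog i)

theorem sum_le_sum_of_prod_castLE_le {d : ℕ} {a b : Fin d → ℝ} (ha : Antitone a)
    (ha0 : 0 ≤ a) (hb0 : 0 ≤ b)
    (hab : ∀ k (h : k ≤ d), ∏ i : Fin k, a (i.castLE h) ≤ ∏ i : Fin k, b (i.castLE h)) :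
    ∑ i, a i ≤ ∑ i, b i := by
  induction d with
  | zero => simp
  | succ d ih =>
    rcases (ha0 (Fin.last d)).eq_or_lt with hlast | hlast
    · rw [Fin.sum_univ_castSucc, Fin.sum_univ_castSucc]
      exact add_le_add
        (ih (ha.comp_monotone Fin.strictMono_castSucc.monotone) (fun _ => ha0 _) (fun _ => hb0 _)
          fun k h => hab k (h.trans d.le_succ))
        (hlast.symm.trans_le (hb0 _))
    · have hapos (i) : 0 < a i := hlast.trans_le (ha (Fin.le_last i))
      have hbprod : 0 < ∏ i, b i :=
        (Finset.prod_pos fun i _ => hapos i).trans_le (hab (d + 1) le_rfl)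
      have hbpos (i) : 0 < b i :=
        (hb0 i).lt_of_ne' (Finset.prod_ne_zero_iff.1 hbprod.ne' i (Finset.mem_univ i))
      exact sum_le_sum_of_prod_castLE_le_of_pos ha hapos hbpos hab

end WeakLogMajorization

section Majorization

variable {n : Type*} [Fintype n] [DecidableEq n]

lemma dotProduct_mulVec_le_of_monovary {D : Matrix n n ℝ} (hD : D ∈ doublyStochastic ℝ n)
    {a b : n → ℝ} (hab : Monovary a b) : a ⬝ᵥ D *ᵥ b ≤ a ⬝ᵥ b := by
  have hconv : Convex ℝ {M : Matrix n n ℝ | a ⬝ᵥ M *ᵥ b ≤ a ⬝ᵥ b} :=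
    convex_halfSpace_le ⟨fun M N => by rw [add_mulVec, dotProduct_add],
      fun c M => by rw [smul_mulVec, dotProduct_smul]⟩ _
  rw [← SetLike.mem_coe, doublyStochastic_eq_convexHull_permMatrix] at hD
  refine convexHull_min ?_ hconv hD
  rintro _ ⟨π, rfl⟩
  rw [Set.mem_ofPred_eq, permMatrix_mulVec]
  exact hab.sum_mul_comp_perm_le_sum_mul

theorem sum_mul_map_mulVec_le {D : Matrix n n ℝ} (hD : D ∈ doublyStochastic ℝ n) {K : Set ℝ}
    {f : ℝ → ℝ} (hf : ConvexOn ℝ K f) {a s : n → ℝ} (ha : 0 ≤ a) (hs : ∀ i, s i ∈ K)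
    (has : Monovary a (f ∘ s)) :
    ∑ i, a i * f ((D *ᵥ s) i) ≤ ∑ i, a i * f (s i) := by
  have jensen (i) : f ((D *ᵥ s) i) ≤ (D *ᵥ (f ∘ s)) i :=
    hf.map_sum_le (fun _ _ => nonneg_of_mem_doublyStochastic hD)
      (sum_row_of_mem_doublyStochastic hD i) fun j _ => hs j
  calc ∑ i, a i * f ((D *ᵥ s) i) ≤ a ⬝ᵥ D *ᵥ (f ∘ s) :=
        Finset.sum_le_sum fun i _ => mul_le_mul_of_nonneg_left (jensen i) (ha i)
    _ ≤ a ⬝ᵥ (f ∘ s) := dotProduct_mulVec_le_of_monovary hD has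

lemma convexOn_rpow_of_nonpos {β : ℝ} (hβ : β ≤ 0) :
    ConvexOn ℝ (Set.Ioi 0) fun x : ℝ => x ^ β := by
  refine ⟨convex_Ioi 0, fun x hx y hy a b ha hb hab => ?_⟩
  have hlog : Real.log (a * x + b * y) * β ≤
      a * (Real.log x * β) + b * (Real.log y * β) := by
    have := mul_le_mul_of_nonpos_right
      (strictConcaveOn_log_Ioi.concaveOn.2 hx hy ha hb hab) hβ
    simp only [smul_eq_mul] at this
    linarith
  have hxy : 0 < a * x + b * y := convex_Ioi 0 hx hy ha hb hab
  calc (a * x + b * y) ^ β = Real.exp (Real.log (a * x + b * y) * β) :=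
        Real.rpow_def_of_pos hxy β
    _ ≤ Real.exp (a * (Real.log x * β) + b * (Real.log y * β)) := Real.exp_le_exp.2 hlog
    _ ≤ a * Real.exp (Real.log x * β) + b * Real.exp (Real.log y * β) :=
        convexOn_exp.2 trivial trivial ha hb hab
    _ = a * x ^ β + b * y ^ β := by
        rw [Real.rpow_def_of_pos hx, Real.rpow_def_of_pos hy]

end Majorization

section UnitaryDiagonalization

variable {n m : Type*} [Fintype n] [DecidableEq n]

lemma star_mul_cancel_left_of_unitary (U : unitaryGroup n ℂ) (M : Matrix n m ℂ) :
    star (U : Matrix n n ℂ) * ((U : Matrix n n ℂ) * M) = M := by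
  rw [← Matrix.mul_assoc, Unitary.coe_star_mul_self, Matrix.one_mul]

lemma mul_star_cancel_left_of_unitary (U : unitaryGroup n ℂ) (M : Matrix n m ℂ) :
    (U : Matrix n n ℂ) * (star (U : Matrix n n ℂ) * M) = M := by
  rw [← Matrix.mul_assoc, mem_unitaryGroup_iff.1 U.2, Matrix.one_mul]

/-- The Hermitian matrix `U diag(v) Uᴴ`, with eigenvalues `v` and the columns of `U` as
eigenvectors. Spectral decompositions are stated as `A = conjDiagonal U v`. -/
def conjDiagonal (U : unitaryGroup n ℂ) (v : n → ℝ) : Matrix n n ℂ :=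
  (U : Matrix n n ℂ) * diagonal (Complex.ofReal ∘ v) * star (U : Matrix n n ℂ)

lemma isHermitian_conjDiagonal (U : unitaryGroup n ℂ) (v : n → ℝ) :
    (conjDiagonal U v).IsHermitian :=
  isHermitian_mul_mul_conjTranspose _ (isHermitian_diagonal_of_self_adjoint _ (by ext; simp))

lemma posSemidef_conjDiagonal (U : unitaryGroup n ℂ) {v : n → ℝ} (hv : 0 ≤ v) :
    (conjDiagonal U v).PosSemidef :=
  (PosSemidef.diagonal fun i => Complex.zero_le_real.2 (hv i)).mul_mul_conjTranspose_same _

lemma posSemidef_conjDiagonal_sandwich (V W : unitaryGroup n ℂ) {q : n → ℝ}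
    (hq0 : 0 ≤ q) (u : n → ℝ) :
    (conjDiagonal W u * conjDiagonal V q * conjDiagonal W u).PosSemidef := by
  simpa only [(isHermitian_conjDiagonal W u).eq] using
    (posSemidef_conjDiagonal V hq0).mul_mul_conjTranspose_same (conjDiagonal W u)

lemma mul_conjDiagonal_mul_star (U V : unitaryGroup n ℂ) (v : n → ℝ) :
    (U : Matrix n n ℂ) * conjDiagonal V v * star (U : Matrix n n ℂ) = conjDiagonal (U * V) v := by
  simp only [conjDiagonal, UnitaryGroup.mul_val, star_mul, mul_assoc]

lemma star_mul_conjDiagonal_mul_self (U : unitaryGroup n ℂ) (v : n → ℝ) :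
    star (U : Matrix n n ℂ) * conjDiagonal U v * U = diagonal (Complex.ofReal ∘ v) := by
  simp only [conjDiagonal, mul_assoc, star_mul_cancel_left_of_unitary,
    Unitary.coe_star_mul_self, mul_one]

lemma conjDiagonal_mul_conjDiagonal (U : unitaryGroup n ℂ) (v w : n → ℝ) :
    conjDiagonal U v * conjDiagonal U w = conjDiagonal U (v * w) := by
  simp only [conjDiagonal, mul_assoc, star_mul_cancel_left_of_unitary]
  rw [← mul_assoc (diagonal _), diagonal_mul_diagonal]
  simp only [Function.comp_def, Pi.mul_apply, Complex.ofReal_mul]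

lemma trace_conjDiagonal (U : unitaryGroup n ℂ) (v : n → ℝ) :
    (conjDiagonal U v).trace = ((∑ i, v i : ℝ) : ℂ) := by
  rw [conjDiagonal, trace_mul_comm, ← mul_assoc, Unitary.coe_star_mul_self, one_mul,
    trace_diagonal, Complex.ofReal_sum]
  rfl

lemma eq_conjDiagonal_eigenvalues {A : Matrix n n ℂ} (hA : A.IsHermitian) :
    A = conjDiagonal hA.eigenvectorUnitary hA.eigenvalues :=
  hA.spectral_theorem

lemma exists_conjDiagonal_comp_perm (U : unitaryGroup n ℂ) (v : n → ℝ) (π : Equiv.Perm n) :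
    ∃ V : unitaryGroup n ℂ, conjDiagonal U v = conjDiagonal V (v ∘ π) := by
  have hV : (U : Matrix n n ℂ).submatrix id π ∈ unitaryGroup n ℂ := by
    rw [mem_unitaryGroup_iff, star_eq_conjTranspose, conjTranspose_submatrix,
      submatrix_mul_equiv, ← star_eq_conjTranspose, mem_unitaryGroup_iff.1 U.2, submatrix_id_id]
  refine ⟨⟨_, hV⟩, ?_⟩
  have hdiag : diagonal (Complex.ofReal ∘ v ∘ π) =
      (diagonal (Complex.ofReal ∘ v)).submatrix π π := by
    rw [submatrix_diagonal_equiv, Function.comp_assoc]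
  simp only [conjDiagonal, hdiag, star_eq_conjTranspose, conjTranspose_submatrix,
    submatrix_mul_equiv, submatrix_id_id]

lemma diagonal_comp_mul_eq {R S : Type*} [CommRing S] [IsDomain S] {e : R → S}
    (he : e.Injective) (f : R → R) {v w : n → R} {X : Matrix n n S}
    (h : diagonal (e ∘ v) * X = X * diagonal (e ∘ w)) :
    diagonal (e ∘ f ∘ v) * X = X * diagonal (e ∘ f ∘ w) := by
  ext i j
  have hij := congrFun (congrFun h i) j
  simp only [diagonal_mul, mul_diagonal, Function.comp_apply] at hij ⊢
  rw [mul_comm] at hij ⊢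
  rcases eq_or_ne (X i j) 0 with hX | hX
  · simp [hX]
  · rw [he (mul_left_cancel₀ hX hij)]

lemma conjDiagonal_eq_conjDiagonal_iff {U V : unitaryGroup n ℂ} {v w : n → ℝ} :
    conjDiagonal U v = conjDiagonal V w ↔
      diagonal (Complex.ofReal ∘ v) * (star (U : Matrix n n ℂ) * V) =
        star (U : Matrix n n ℂ) * V * diagonal (Complex.ofReal ∘ w) := by
  constructor <;> intro h
  · have := congrArg (fun M => star (U : Matrix n n ℂ) * M * V) h
    simpa only [conjDiagonal, mul_assoc, star_mul_cancel_left_of_unitary,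
      Unitary.coe_star_mul_self, mul_one] using this
  · have := congrArg (fun M => (U : Matrix n n ℂ) * M * star (V : Matrix n n ℂ)) h
    simpa only [conjDiagonal, mul_assoc, mul_star_cancel_left_of_unitary,
      mem_unitaryGroup_iff.1 V.2, mul_one] using this

theorem conjDiagonal_comp_eq_of_eq (f : ℝ → ℝ) {U V : unitaryGroup n ℂ} {v w : n → ℝ}
    (h : conjDiagonal U v = conjDiagonal V w) :
    conjDiagonal U (f ∘ v) = conjDiagonal V (f ∘ w) := by
  rw [conjDiagonal_eq_conjDiagonal_iff] at h ⊢
  exact diagonal_comp_mul_eq Complex.ofReal_injective f h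

lemma mpow_conjDiagonal {d : ℕ} (U : unitaryGroup (Fin d) ℂ) (v : Fin d → ℝ) (t : ℝ) :
    mpow (conjDiagonal U v) t = conjDiagonal U fun i => v i ^ t := by
  have hA := isHermitian_conjDiagonal U v
  rw [mpow, dif_pos hA]
  exact (conjDiagonal_comp_eq_of_eq (· ^ t) (eq_conjDiagonal_eigenvalues hA)).symm

end UnitaryDiagonalization

section SortedEigenvalues

variable {d : ℕ} {A : Matrix (Fin d) (Fin d) ℂ}

lemma monotone_eigUp (hA : A.IsHermitian) : Monotone (eigUp hA) := Tuple.monotone_sort _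

lemma antitone_eigDown (hA : A.IsHermitian) : Antitone (eigDown hA) :=
  (monotone_eigUp hA).comp_antitone Fin.rev_anti

lemma exists_eq_conjDiagonal_eigenvalues_comp (hA : A.IsHermitian) (π : Equiv.Perm (Fin d)) :
    ∃ U, A = conjDiagonal U (hA.eigenvalues ∘ π) := by
  simpa only [← eq_conjDiagonal_eigenvalues hA] using
    exists_conjDiagonal_comp_perm hA.eigenvectorUnitary hA.eigenvalues π

lemma exists_eq_conjDiagonal_eigUp (hA : A.IsHermitian) :
    ∃ U, A = conjDiagonal U (eigUp hA) :=
  exists_eq_conjDiagonal_eigenvalues_comp hA (Tuple.sort hA.eigenvalues)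

lemma exists_eq_conjDiagonal_eigDown (hA : A.IsHermitian) :
    ∃ U, A = conjDiagonal U (eigDown hA) :=
  exists_eq_conjDiagonal_eigenvalues_comp hA (Fin.revPerm.trans (Tuple.sort hA.eigenvalues))

lemma re_trace_mpow_eq_sum_eigDown_rpow (hA : A.IsHermitian) (t : ℝ) :
    (mpow A t).trace.re = ∑ i, eigDown hA i ^ t := by
  obtain ⟨U, hU⟩ := exists_eq_conjDiagonal_eigDown hA
  conv_lhs => rw [hU, mpow_conjDiagonal, trace_conjDiagonal, Complex.ofReal_re]

lemma eigUp_pos (hA : A.PosDef) (i : Fin d) : 0 < eigUp hA.1 i := hA.eigenvalues_pos _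

lemma eigDown_nonneg (hA : A.PosSemidef) : 0 ≤ eigDown hA.1 := fun _ => hA.eigenvalues_nonneg _

end SortedEigenvalues

section HornInequality

variable {d k : ℕ}

lemma det_conjTranspose_mul_conjDiagonal_mul_le (h : k ≤ d) (V : unitaryGroup (Fin d) ℂ)
    {v : Fin d → ℝ} (hv : Antitone v) (hv0 : 0 ≤ v) (Z : Matrix (Fin d) (Fin k) ℂ) :
    (Zᴴ * conjDiagonal V v * Z).det ≤
      ((∏ i : Fin k, v (i.castLE h) : ℝ) : ℂ) * (Zᴴ * Z).det := by
  have hdet := det_conjTranspose_mul_diagonal_mul_le h hv hv0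
    (star (V : Matrix (Fin d) (Fin d) ℂ) * Z)
  have hstar : (star (V : Matrix (Fin d) (Fin d) ℂ))ᴴ = V := star_star _
  simpa only [conjDiagonal, conjTranspose_mul, hstar, Matrix.mul_assoc,
    mul_star_cancel_left_of_unitary] using hdet

lemma exists_isometry_det_conjDiagonal_eq_prod (h : k ≤ d) (E : unitaryGroup (Fin d) ℂ)
    (c : Fin d → ℝ) :
    ∃ Z : Matrix (Fin d) (Fin k) ℂ, Zᴴ * Z = 1 ∧
      (Zᴴ * conjDiagonal E c * Z).det = ((∏ i : Fin k, c (i.castLE h) : ℝ) : ℂ) := by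
  let E' : Matrix (Fin d) (Fin d) ℂ := E
  let Z := E'.submatrix id (Fin.castLE h)
  have hcompress (M : Matrix (Fin d) (Fin d) ℂ) :
      Zᴴ * M * Z = (star E' * M * E').submatrix (Fin.castLE h) (Fin.castLE h) := rfl
  refine ⟨Z, ?_, ?_⟩
  · rw [← Matrix.mul_one Zᴴ, hcompress, mul_one, Unitary.coe_star_mul_self E,
      submatrix_one _ (Fin.castLE_injective h)]
  · rw [hcompress, star_mul_conjDiagonal_mul_self,
      submatrix_diagonal _ _ (Fin.castLE_injective h), det_diagonal, Complex.ofReal_prod]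
    rfl

theorem prod_castLE_le_of_conjDiagonal_eq {V W E : unitaryGroup (Fin d) ℂ} {q u c : Fin d → ℝ}
    (hq : Antitone q) (hq0 : 0 ≤ q) (hu : Antitone u) (hu0 : 0 ≤ u)
    (hE : conjDiagonal W u * conjDiagonal V q * conjDiagonal W u = conjDiagonal E c)
    (h : k ≤ d) :
    ∏ i : Fin k, c (i.castLE h) ≤
      ∏ i : Fin k, u (i.castLE h) * q (i.castLE h) * u (i.castLE h) := by
  obtain ⟨Z, hZ, hdet⟩ := exists_isometry_det_conjDiagonal_eq_prod h E c
  have hu2 : Antitone (u * u) := fun i j hij => mul_le_mul (hu hij) (hu hij) (hu0 j) (hu0 i)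
  have houter := det_conjTranspose_mul_conjDiagonal_mul_le h V hq hq0 (conjDiagonal W u * Z)
  have hinner := det_conjTranspose_mul_conjDiagonal_mul_le h W hu2 (mul_nonneg hu0 hu0) Z
  have hsplit : (conjDiagonal W u * Z)ᴴ * conjDiagonal V q * (conjDiagonal W u * Z) =
      Zᴴ * conjDiagonal E c * Z := by
    simp only [← hE, conjTranspose_mul, (isHermitian_conjDiagonal W u).eq, Matrix.mul_assoc]
  have hgram : (conjDiagonal W u * Z)ᴴ * (conjDiagonal W u * Z) =
      Zᴴ * conjDiagonal W (u * u) * Z := by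
    simp only [← conjDiagonal_mul_conjDiagonal, conjTranspose_mul,
      (isHermitian_conjDiagonal W u).eq, Matrix.mul_assoc]
  rw [hsplit, hdet, hgram] at houter
  rw [hZ, det_one, mul_one] at hinner
  have hprod : (0 : ℂ) ≤ ((∏ i : Fin k, q (i.castLE h) : ℝ) : ℂ) :=
    Complex.zero_le_real.2 (Finset.prod_nonneg fun i _ => hq0 _)
  have hbound := houter.trans (mul_le_mul_of_nonneg_left hinner hprod)
  rw [← Complex.ofReal_mul, Complex.real_le_real, ← Finset.prod_mul_distrib] at hbound
  refine hbound.trans_eq (Finset.prod_congr rfl fun i _ => ?_)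
  simp only [Pi.mul_apply]
  ring

theorem re_trace_mpow_conjDiagonal_sandwich_le {V W : unitaryGroup (Fin d) ℂ} {q u : Fin d → ℝ}
    (hq : Antitone q) (hq0 : 0 ≤ q) (hu : Antitone u) (hu0 : 0 ≤ u) {z : ℝ} (hz : 0 ≤ z) :
    (mpow (conjDiagonal W u * conjDiagonal V q * conjDiagonal W u) z).trace.re ≤
      ∑ i, (u i * q i * u i) ^ z := by
  have hM := posSemidef_conjDiagonal_sandwich V W hq0 u
  obtain ⟨E, hE⟩ := exists_eq_conjDiagonal_eigDown hM.1
  have hc0 := eigDown_nonneg hM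
  have hc := antitone_eigDown hM.1
  have huqu (i) : 0 ≤ u i * q i * u i := mul_nonneg (mul_nonneg (hu0 i) (hq0 i)) (hu0 i)
  rw [re_trace_mpow_eq_sum_eigDown_rpow hM.1]
  refine sum_le_sum_of_prod_castLE_le (fun i j hij => Real.rpow_le_rpow (hc0 j) (hc hij) hz)
    (fun i => Real.rpow_nonneg (hc0 i) z) (fun i => Real.rpow_nonneg (huqu i) z) fun k h => ?_
  rw [Real.finsetProd_rpow _ _ fun i _ => hc0 _, Real.finsetProd_rpow _ _ fun i _ => huqu _]
  exact Real.rpow_le_rpow (Finset.prod_nonneg fun i _ => hc0 _)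
    (prod_castLE_le_of_conjDiagonal_eq hq hq0 hu hu0 hE h) hz

end HornInequality

section MixedUnitary

variable {n ι : Type*} [Fintype n] [DecidableEq n] [Fintype ι]

/-- The matrix of squared moduli `|U i j|²` of a unitary matrix. It maps the spectrum `s` of
`U diag(s) Uᴴ` to the diagonal entries of that matrix. -/
noncomputable def unistochastic (U : unitaryGroup n ℂ) : Matrix n n ℝ :=
  of fun i j => ‖(U : Matrix n n ℂ) i j‖ ^ 2

lemma conjDiagonal_apply_self (U : unitaryGroup n ℂ) (s : n → ℝ) (i : n) :
    conjDiagonal U s i i = ((unistochastic U *ᵥ s) i : ℂ) := by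
  rw [conjDiagonal, mul_apply]
  simp only [mul_diagonal, mulVec, dotProduct, unistochastic, of_apply, Complex.ofReal_sum,
    star_apply, Function.comp_apply, Complex.ofReal_mul, Complex.ofReal_pow]
  refine Finset.sum_congr rfl fun j _ => ?_
  rw [mul_right_comm, ← Complex.mul_conj']
  rfl

lemma unistochastic_star (U : unitaryGroup n ℂ) : unistochastic (star U) = (unistochastic U)ᵀ := by
  ext i j
  simp [unistochastic]

lemma unistochastic_mulVec_one (U : unitaryGroup n ℂ) : unistochastic U *ᵥ 1 = 1 := by
  have hone : conjDiagonal U 1 = 1 := by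
    rw [conjDiagonal, ← mem_unitaryGroup_iff.1 U.2]
    congr 1
    rw [← mul_one (U : Matrix n n ℂ), mul_assoc, ← diagonal_one]
    simp [Function.comp_def]
  ext i
  have := conjDiagonal_apply_self U 1 i
  rw [hone, one_apply_eq] at this
  exact_mod_cast this.symm

lemma unistochastic_mem_doublyStochastic (U : unitaryGroup n ℂ) :
    unistochastic U ∈ doublyStochastic ℝ n := by
  refine ⟨fun i j => sq_nonneg _, unistochastic_mulVec_one U, ?_⟩
  rw [← mulVec_transpose, ← unistochastic_star, unistochastic_mulVec_one]

/-- The image `∑ i, p i • U i A (U i)ᴴ` of `A` under the mixed unitary channel with weights `p`. -/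
def mixedUnitary (p : ι → ℝ) (U : ι → unitaryGroup n ℂ) (A : Matrix n n ℂ) : Matrix n n ℂ :=
  ∑ i, ((p i : ℝ) : ℂ) • ((U i : Matrix n n ℂ) * A * star (U i : Matrix n n ℂ))

lemma isHermitian_mixedUnitary (p : ι → ℝ) (U : ι → unitaryGroup n ℂ) {A : Matrix n n ℂ}
    (hA : A.IsHermitian) : (mixedUnitary p U A).IsHermitian :=
  isSelfAdjoint_sum _ fun i _ =>
    IsSelfAdjoint.smul (Complex.conj_ofReal (p i)) (isHermitian_mul_mul_conjTranspose _ hA)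

theorem exists_doublyStochastic_of_mixedUnitary_eq {p : ι → ℝ} (hp : ∀ i, 0 ≤ p i)
    (hp1 : ∑ i, p i = 1) {U : ι → unitaryGroup n ℂ} {S V : unitaryGroup n ℂ} {s t : n → ℝ}
    (h : mixedUnitary p U (conjDiagonal S s) = conjDiagonal V t) :
    ∃ D ∈ doublyStochastic ℝ n, t = D *ᵥ s := by
  let D (i : ι) := unistochastic (star V * (U i * S))
  refine ⟨∑ i, p i • D i, ?_, ?_⟩
  · exact convex_doublyStochastic.sum_mem (fun i _ => hp i) hp1
      fun i _ => unistochastic_mem_doublyStochastic _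
  have hdiag : diagonal (Complex.ofReal ∘ t) =
      ∑ i, ((p i : ℝ) : ℂ) • conjDiagonal (star V * (U i * S)) s :=
    calc diagonal (Complex.ofReal ∘ t)
        = star (V : Matrix n n ℂ) * conjDiagonal V t * V :=
          (star_mul_conjDiagonal_mul_self V t).symm
      _ = _ := by
          rw [← h, mixedUnitary, Finset.mul_sum, Finset.sum_mul]
          refine Finset.sum_congr rfl fun i _ => ?_
          rw [mul_conjDiagonal_mul_star, mul_smul_comm, smul_mul_assoc,
            ← mul_conjDiagonal_mul_star (star V), Unitary.coe_star, star_star]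
  ext j
  have hj := congrFun (congrFun hdiag j) j
  rw [diagonal_apply_eq, Matrix.sum_apply] at hj
  simp only [Matrix.smul_apply, conjDiagonal_apply_self, smul_eq_mul, Function.comp_apply] at hj
  rw [sum_mulVec, Finset.sum_apply]
  simp only [smul_mulVec, Pi.smul_apply, smul_eq_mul]
  exact_mod_cast hj

end MixedUnitary

section Fidelity

variable {d : ℕ} {α z : ℝ}

lemma rpow_sandwich {r t : ℝ} (hr : 0 ≤ r) (ht : 0 < t) (hz : 0 < z) :
    (t ^ ((1 - α) / (2 * z)) * r ^ (α / z) * t ^ ((1 - α) / (2 * z))) ^ z =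
      r ^ α * t ^ (1 - α) :=
  calc (t ^ ((1 - α) / (2 * z)) * r ^ (α / z) * t ^ ((1 - α) / (2 * z))) ^ z
      = (r ^ (α / z) * t ^ ((1 - α) / z)) ^ z := by
        rw [mul_right_comm, ← Real.rpow_add ht, mul_comm]
        congr 3
        field_simp
        ring
    _ = r ^ α * t ^ (1 - α) := by
        rw [Real.mul_rpow (Real.rpow_nonneg hr _) (Real.rpow_nonneg ht.le _), ← Real.rpow_mul hr,
          ← Real.rpow_mul ht.le, div_mul_cancel₀ _ hz.ne', div_mul_cancel₀ _ hz.ne']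

lemma Faz_conjDiagonal_self (V : unitaryGroup (Fin d) ℂ) {r t : Fin d → ℝ} (hr : 0 ≤ r)
    (ht : ∀ i, 0 < t i) (hz : 0 < z) :
    Faz (conjDiagonal V r) (conjDiagonal V t) α z = FazC r t α := by
  simp only [Faz, FazC, mpow_conjDiagonal, conjDiagonal_mul_conjDiagonal, trace_conjDiagonal,
    Complex.ofReal_re, Pi.mul_apply, rpow_sandwich (hr _) (ht _) hz]

lemma re_trace_mpow_nonneg {A : Matrix (Fin d) (Fin d) ℂ} (hA : A.PosSemidef) (t : ℝ) :
    0 ≤ (mpow A t).trace.re := by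
  rw [re_trace_mpow_eq_sum_eigDown_rpow hA.1]
  exact Finset.sum_nonneg fun i _ => Real.rpow_nonneg (eigDown_nonneg hA i) t

theorem Faz_conjDiagonal_le_FazC (V W : unitaryGroup (Fin d) ℂ) {r t : Fin d → ℝ}
    (hr : Antitone r) (hr0 : 0 ≤ r) (ht : Monotone t) (ht0 : ∀ i, 0 < t i) (hα : 1 ≤ α)
    (hz : 0 < z) : Faz (conjDiagonal V r) (conjDiagonal W t) α z ≤ FazC r t α := by
  have hα0 : 0 ≤ α := zero_le_one.trans hα
  have hexp : (1 - α) / (2 * z) ≤ 0 := div_nonpos_of_nonpos_of_nonneg (by linarith) (by linarith)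
  have hq : Antitone fun i => r i ^ (α / z) := fun i j hij =>
    Real.rpow_le_rpow (hr0 j) (hr hij) (div_nonneg hα0 hz.le)
  have hq0 : 0 ≤ fun i => r i ^ (α / z) := fun i => Real.rpow_nonneg (hr0 i) _
  have hu : Antitone fun i => t i ^ ((1 - α) / (2 * z)) := fun i j hij =>
    Real.rpow_le_rpow_of_nonpos (ht0 i) (ht hij) hexp
  have hu0 : 0 ≤ fun i => t i ^ ((1 - α) / (2 * z)) := fun i => Real.rpow_nonneg (ht0 i).le _
  have hHorn := re_trace_mpow_conjDiagonal_sandwich_le (V := V) (W := W) hq hq0 hu hu0 hz.le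
  simp only [rpow_sandwich (hr0 _) (ht0 _) hz] at hHorn
  simp only [Faz, FazC, mpow_conjDiagonal _ _ (α / z), mpow_conjDiagonal _ _ ((1 - α) / (2 * z))]
  exact Real.rpow_le_rpow
    (re_trace_mpow_nonneg (posSemidef_conjDiagonal_sandwich V W hq0 _) z) hHorn
    (one_div_nonneg.2 hα0)

theorem FazC_mulVec_le {D : Matrix (Fin d) (Fin d) ℝ} (hD : D ∈ doublyStochastic ℝ (Fin d))
    {r s : Fin d → ℝ} (hr : Antitone r) (hr0 : 0 ≤ r) (hs : Monotone s) (hs0 : ∀ i, 0 < s i)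
    (hα : 1 ≤ α) : FazC r (D *ᵥ s) α ≤ FazC r s α := by
  have hα0 : 0 ≤ α := zero_le_one.trans hα
  have hDs (i) : 0 ≤ (D *ᵥ s) i :=
    dotProduct_nonneg_of_nonneg (fun j => nonneg_of_mem_doublyStochastic hD) fun j => (hs0 j).le
  have hrα : Antitone fun i => r i ^ α := fun i j hij => Real.rpow_le_rpow (hr0 j) (hr hij) hα0
  have hsα : Antitone fun i => s i ^ (1 - α) := fun i j hij =>
    Real.rpow_le_rpow_of_nonpos (hs0 i) (hs hij) (by linarith)
  refine Real.rpow_le_rpow (Finset.sum_nonneg fun i _ =>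
    mul_nonneg (Real.rpow_nonneg (hr0 i) _) (Real.rpow_nonneg (hDs i) _)) ?_ (one_div_nonneg.2 hα0)
  exact sum_mul_map_mulVec_le hD (convexOn_rpow_of_nonpos (by linarith))
    (fun i => Real.rpow_nonneg (hr0 i) _) hs0 (hrα.monovary hsα)

variable {ρ σ : Matrix (Fin d) (Fin d) ℂ}

theorem exists_unitary_Faz_conj_eq (hρ : ρ.PosSemidef) (hσ : σ.PosDef) (hz : 0 < z) :
    ∃ U : unitaryGroup (Fin d) ℂ,
      Faz ρ (U * σ * star (U : Matrix (Fin d) (Fin d) ℂ)) α z =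
        FazC (eigDown hρ.1) (eigUp hσ.1) α := by
  obtain ⟨V, hV⟩ := exists_eq_conjDiagonal_eigDown hρ.1
  obtain ⟨S, hS⟩ := exists_eq_conjDiagonal_eigUp hσ.1
  refine ⟨V * star S, ?_⟩
  have hconj : (V * star S : unitaryGroup (Fin d) ℂ) * σ *
      star ((V * star S : unitaryGroup (Fin d) ℂ) : Matrix (Fin d) (Fin d) ℂ) =
        conjDiagonal V (eigUp hσ.1) := by
    conv_lhs => rw [hS, mul_conjDiagonal_mul_star, mul_assoc, Unitary.star_mul_self, mul_one]
  rw [hconj]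
  conv_lhs => rw [hV]
  exact Faz_conjDiagonal_self V (eigDown_nonneg hρ) (eigUp_pos hσ) hz

theorem Faz_mixedUnitary_le {ι : Type*} [Fintype ι] (hρ : ρ.PosSemidef) (hσ : σ.PosDef)
    (hα : 1 ≤ α) (hz : 0 < z) {p : ι → ℝ} (hp : ∀ i, 0 ≤ p i) (hp1 : ∑ i, p i = 1)
    (U : ι → unitaryGroup (Fin d) ℂ) :
    Faz ρ (mixedUnitary p U σ) α z ≤ FazC (eigDown hρ.1) (eigUp hσ.1) α := by
  have hτ := isHermitian_mixedUnitary p U hσ.1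
  obtain ⟨V, hV⟩ := exists_eq_conjDiagonal_eigDown hρ.1
  obtain ⟨S, hS⟩ := exists_eq_conjDiagonal_eigUp hσ.1
  obtain ⟨W, hW⟩ := exists_eq_conjDiagonal_eigUp hτ
  obtain ⟨D, hD, hDs⟩ := exists_doublyStochastic_of_mixedUnitary_eq hp hp1
    ((congrArg (mixedUnitary p U) hS).symm.trans hW)
  have ht0 (i) : 0 < eigUp hτ i := by
    rw [hDs]
    exact (convex_Ioi (0 : ℝ)).sum_mem (fun _ _ => nonneg_of_mem_doublyStochastic hD)
      (sum_row_of_mem_doublyStochastic hD i) fun j _ => Set.mem_Ioi.2 (eigUp_pos hσ j)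
  have hρ' := antitone_eigDown hρ.1
  calc Faz ρ (mixedUnitary p U σ) α z
      = Faz (conjDiagonal V (eigDown hρ.1)) (conjDiagonal W (eigUp hτ)) α z := by rw [← hV, ← hW]
    _ ≤ FazC (eigDown hρ.1) (eigUp hτ) α :=
        Faz_conjDiagonal_le_FazC V W hρ' (eigDown_nonneg hρ) (monotone_eigUp hτ) ht0 hα hz
    _ = FazC (eigDown hρ.1) (D *ᵥ eigUp hσ.1) α := by rw [hDs]
    _ ≤ FazC (eigDown hρ.1) (eigUp hσ.1) α :=
        FazC_mulVec_le hD hρ' (eigDown_nonneg hρ) (monotone_eigUp hσ.1) (eigUp_pos hσ) hα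

theorem stmt_16_general (hρ : ρ.PosSemidef) (hσ : σ.PosDef) (hα : 1 ≤ α) (hz : 0 < z) :
    IsGreatest {x : ℝ | ∃ (k : ℕ) (p : Fin k → ℝ) (U : Fin k → unitaryGroup (Fin d) ℂ),
        (∀ i, 0 ≤ p i) ∧ ∑ i, p i = 1 ∧ x = Faz ρ (mixedUnitary p U σ) α z}
      (FazC (eigDown hρ.1) (eigUp hσ.1) α) ∧
    ∃ U ∈ unitaryGroup (Fin d) ℂ,
      Faz ρ (U * σ * star U) α z = FazC (eigDown hρ.1) (eigUp hσ.1) α := by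
  obtain ⟨U, hU⟩ := exists_unitary_Faz_conj_eq (α := α) hρ hσ hz
  refine ⟨⟨⟨1, fun _ => 1, fun _ => U, fun _ => zero_le_one, by simp, ?_⟩, ?_⟩, U, U.2, hU⟩
  · simp [mixedUnitary, hU]
  · rintro _ ⟨k, p, U, hp, hp1, rfl⟩
    exact Faz_mixedUnitary_le hρ hσ hα hz hp hp1 U

end Fidelity

/-- for positive definite density matrices `ρ, σ` and `(α,z)` with
`1 < α ≤ 2, α/2 ≤ z ≤ α` or `2 ≤ α, α−1 ≤ z ≤ α`, the maximum of
`F_{α,z}(ρ, Σ_i p_i U_i σ U_i*)` over all mixed unitary channels equals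
`F_α^C(λ↓(ρ), λ↑(σ))`, attained by a single unitary conjugation. -/
theorem stmt_16 {d : ℕ} (ρ σ : Matrix (Fin d) (Fin d) ℂ)
    (hρ : ρ.PosDef) (hσ : σ.PosDef) (hρ1 : ρ.trace = 1) (hσ1 : σ.trace = 1)
    (α z : ℝ)
    (hαz : (1 < α ∧ α ≤ 2 ∧ α / 2 ≤ z ∧ z ≤ α) ∨ (2 ≤ α ∧ α - 1 ≤ z ∧ z ≤ α)) :
    IsGreatest {x : ℝ | ∃ (k : ℕ) (p : Fin k → ℝ)
        (U : Fin k → Matrix.unitaryGroup (Fin d) ℂ),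
        (∀ i, 0 ≤ p i) ∧ ∑ i, p i = 1 ∧
        x = Faz ρ (∑ i, ((p i : ℝ) : ℂ) •
              ((U i : Matrix (Fin d) (Fin d) ℂ) * σ *
                star (U i : Matrix (Fin d) (Fin d) ℂ))) α z}
      (FazC (eigDown hρ.1) (eigUp hσ.1) α) ∧
    ∃ U ∈ Matrix.unitaryGroup (Fin d) ℂ,
      Faz ρ (U * σ * star U) α z = FazC (eigDown hρ.1) (eigUp hσ.1) α := by
  have hα : 1 ≤ α := by rcases hαz with h | h <;> linarith [h.1]
  have hz : 0 < z := by rcases hαz with ⟨_, _, h, _⟩ | ⟨_, h, _⟩ <;> linarith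
  exact stmt_16_general hρ.posSemidef hσ hα hz
end
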